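/- For n ≥ 1, the set 𝕊_n of derivations D = Σ_{j=1}^n p_j ∂/∂x_j of k[x₁, …, x_n] (where p_j = D(x_j)) satisfying Σ_{j=1}^n ∂p_j/∂x_j = 0 is a Lie subalgebra of the Lie algebra of all k-linear derivations of k[x₁, …, x_n]; and for every n ≥ 2, the universal enveloping algebra U(𝕊_n) is neither left noetherian nor right noetherian. -/

import Mathlib

/-!
Statement 17: For n ≥ 1, the set 𝕊ₙ of derivations D = Σⱼ pⱼ ∂/∂xⱼ of k[x₁,…,xₙ]
(where pⱼ = D(xⱼ)) satisfying Σⱼ ∂pⱼ/∂xⱼ = 0 is a Lie subalgebra of the Lie algebra of all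
k-linear derivations of k[x₁,…,xₙ]; and for every n ≥ 2, U(𝕊ₙ) is neither left noetherian
nor right noetherian.
-/

noncomputable section

open MvPolynomial

/-- A ring is not left noetherian if it has a sequence each of whose terms is separated by a left
ideal from all the previous ones. -/
theorem not_isNoetherianRing_of_separating_ideals {R : Type*} [Ring R] (a : ℕ → R)
    (h : ∀ m, ∃ J : Ideal R, (∀ i < m, a i ∈ J) ∧ a m ∉ J) : ¬ IsNoetherianRing R := by
  intro hR
  let I : ℕ →o Ideal R :=
    ⟨fun m => Ideal.span (a '' Set.Iio m), fun p q hpq =>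
      Ideal.span_mono (Set.image_mono (Set.Iio_subset_Iio hpq))⟩
  obtain ⟨m, hm⟩ := monotone_stabilizes_iff_noetherian.mpr hR I
  obtain ⟨J, hJ, hmJ⟩ := h m
  have hle : I m ≤ J := Ideal.span_le.mpr (by rintro _ ⟨i, hi, rfl⟩; exact hJ i hi)
  refine hmJ (hle ?_)
  rw [hm (m + 1) m.le_succ]
  exact Ideal.subset_span ⟨m, Nat.lt_succ_self m, rfl⟩

namespace UniversalEnvelopingAlgebra

attribute [local instance] LieRing.ofAssociativeRing

variable (k : Type*) (L : Type*) [CommRing k] [LieRing L] [LieAlgebra k L]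

/-- The Lie algebra morphism from `L` to the opposite of its enveloping algebra given by
`x ↦ -x`. -/
def antipodeLieHom : L →ₗ⁅k⁆ (UniversalEnvelopingAlgebra k L)ᵐᵒᵖ where
  toFun x := MulOpposite.op (-ι k x)
  map_add' x y := by simp [add_comm]
  map_smul' c x := by simp
  map_lie' {x y} := by
    apply MulOpposite.unop_injective
    simp only [LieHom.map_lie, LieRing.of_associative_ring_bracket, MulOpposite.unop_op,
      MulOpposite.unop_sub, MulOpposite.unop_mul]
    noncomm_ring

/-- The antipode of the enveloping algebra, as a ring morphism from the opposite algebra. -/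
def antipode : (UniversalEnvelopingAlgebra k L)ᵐᵒᵖ →+* UniversalEnvelopingAlgebra k L where
  toFun u := (lift k (antipodeLieHom k L) u.unop).unop
  map_one' := by simp
  map_mul' u v := by simp
  map_zero' := by simp
  map_add' u v := by simp

theorem antipode_op_ι (x : L) : antipode k L (MulOpposite.op (ι k x)) = -ι k x := by
  change (lift k (antipodeLieHom k L) (ι k x)).unop = -ι k x
  rw [lift_ι_apply]
  rfl

variable {k L}

/-- If a sequence in `L` acts on suitable vectors of representations of `L` in a triangular way,
then the enveloping algebra of `L` is neither left nor right noetherian. -/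
theorem not_isNoetherianRing_of_representations (a : ℕ → L) (V : ℕ → Type*)
    [∀ m, AddCommGroup (V m)] [∀ m, Module k (V m)] (ρ : ∀ m, L →ₗ⁅k⁆ Module.End k (V m))
    (v : ∀ m, V m) (h₀ : ∀ m, ∀ i < m, ρ m (a i) (v m) = 0) (h₁ : ∀ m, ρ m (a m) (v m) ≠ 0) :
    ¬ IsNoetherianRing (UniversalEnvelopingAlgebra k L) ∧
      ¬ IsNoetherianRing (UniversalEnvelopingAlgebra k L)ᵐᵒᵖ := by
  have key : ∀ m, ∃ J : Ideal (UniversalEnvelopingAlgebra k L),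
      (∀ i < m, ι k (a i) ∈ J) ∧ ι k (a m) ∉ J := by
    intro m
    let J : Ideal (UniversalEnvelopingAlgebra k L) :=
      { carrier := {u | lift k (ρ m) u (v m) = 0}
        add_mem' := fun {x y} hx hy => by
          simp only [Set.mem_ofPred_eq] at hx hy ⊢
          rw [map_add, LinearMap.add_apply, hx, hy, add_zero]
        zero_mem' := by simp
        smul_mem' := fun c x hx => by
          simp only [Set.mem_ofPred_eq] at hx ⊢
          rw [smul_eq_mul, map_mul, Module.End.mul_apply, hx, map_zero] }
    have hJ (x : L) : ι k x ∈ J ↔ ρ m x (v m) = 0 := by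
      change lift k (ρ m) (ι k x) (v m) = 0 ↔ _
      rw [lift_ι_apply]
    exact ⟨J, fun i hi => (hJ _).mpr (h₀ m i hi), fun hm => h₁ m ((hJ _).mp hm)⟩
  refine ⟨not_isNoetherianRing_of_separating_ideals _ key,
    not_isNoetherianRing_of_separating_ideals (fun i => MulOpposite.op (ι k (a i))) fun m => ?_⟩
  obtain ⟨J, hJ, hmJ⟩ := key m
  refine ⟨J.comap (antipode k L), fun i hi => ?_, ?_⟩
  · rw [Ideal.mem_comap, antipode_op_ι]
    exact neg_mem (hJ i hi)
  · rwa [Ideal.mem_comap, antipode_op_ι, neg_mem_iff]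

end UniversalEnvelopingAlgebra

namespace MvPolynomial

variable {k : Type*} [CommRing k] {σ τ : Type*}

theorem derivation_rename {D : Derivation k (MvPolynomial σ k) (MvPolynomial σ k)}
    {E : Derivation k (MvPolynomial τ k) (MvPolynomial τ k)} {f : σ → τ}
    (h : ∀ i, E (X (f i)) = rename f (D (X i))) (p : MvPolynomial σ k) :
    E (rename f p) = rename f (D p) := by
  induction p using MvPolynomial.induction_on with
  | C c => simp
  | add p q hp hq => simp [hp, hq]
  | mul_X p i hp => simp [hp, h]

theorem derivation_rename_eq_zero {E : Derivation k (MvPolynomial τ k) (MvPolynomial τ k)}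
    {f : σ → τ} (h : ∀ i, E (X (f i)) = 0) (p : MvPolynomial σ k) : E (rename f p) = 0 := by
  simpa using derivation_rename (D := 0) (by simpa using h) p

theorem pderiv_comm (i j : σ) (p : MvPolynomial σ k) :
    pderiv i (pderiv j p) = pderiv j (pderiv i p) := by
  classical
  have h : ⁅pderiv (R := k) i, pderiv (R := k) j⁆ = 0 := by
    ext1 l
    simp [Derivation.commutator_apply, pderiv_X, Pi.single_apply, apply_ite]
  exact sub_eq_zero.mp (DFunLike.congr_fun h p)

section Divergence

variable [Fintype σ]

theorem derivation_apply_eq_sum (D : Derivation k (MvPolynomial σ k) (MvPolynomial σ k))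
    (p : MvPolynomial σ k) : D p = ∑ i, D (X i) * pderiv i p := by
  classical
  induction p using MvPolynomial.induction_on with
  | C c => simp
  | add p q hp hq => simp [hp, hq, mul_add, Finset.sum_add_distrib]
  | mul_X p j hp =>
    simp only [Derivation.leibniz, smul_eq_mul, mul_add, Finset.sum_add_distrib, pderiv_X,
      Pi.single_apply, mul_ite, mul_one, mul_zero, Finset.sum_ite_eq, Finset.mem_univ, if_true, hp,
      Finset.mul_sum]
    simp only [mul_comm p, mul_left_comm]

theorem pderiv_derivation_apply (D : Derivation k (MvPolynomial σ k) (MvPolynomial σ k))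
    (j : σ) (p : MvPolynomial σ k) :
    pderiv j (D p) = D (pderiv j p) + ∑ i, pderiv j (D (X i)) * pderiv i p := by
  rw [derivation_apply_eq_sum D p, derivation_apply_eq_sum D (pderiv j p), map_sum,
    ← Finset.sum_add_distrib]
  refine Finset.sum_congr rfl fun i _ => ?_
  rw [Derivation.leibniz, smul_eq_mul, smul_eq_mul, pderiv_comm j i]
  ring

/-- The divergence of the vector field attached to a derivation of a polynomial ring. -/
def divergence (D : Derivation k (MvPolynomial σ k) (MvPolynomial σ k)) : MvPolynomial σ k :=
  ∑ j, pderiv j (D (X j))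

theorem divergence_lie (D E : Derivation k (MvPolynomial σ k) (MvPolynomial σ k)) :
    divergence ⁅D, E⁆ = D (divergence E) - E (divergence D) := by
  have hsub (j : σ) : pderiv j (⁅D, E⁆ (X j)) = pderiv j (D (E (X j))) - pderiv j (E (D (X j))) := by
    rw [Derivation.commutator_apply, map_sub]
  have hD (j : σ) := pderiv_derivation_apply D j (E (X j))
  have hE (j : σ) := pderiv_derivation_apply E j (D (X j))
  simp only [divergence, hsub, hD, hE, Finset.sum_sub_distrib, Finset.sum_add_distrib, map_sum]
  rw [Finset.sum_comm (f := fun j i => pderiv j (E (X i)) * pderiv i (D (X j)))]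
  simp only [mul_comm (pderiv _ (E _))]
  ring

variable (k σ) in
/-- The Lie algebra of divergence-free derivations of a polynomial ring. -/
def divergenceFree : LieSubalgebra k (Derivation k (MvPolynomial σ k) (MvPolynomial σ k)) where
  carrier := {D | divergence D = 0}
  add_mem' {D E} hD hE := by
    simp_all [divergence, Finset.sum_add_distrib]
  zero_mem' := by simp [divergence]
  smul_mem' c D hD := by
    simp only [Set.mem_ofPred_eq, divergence] at hD ⊢
    simp [← Finset.smul_sum, hD]
  lie_mem' {D E} hD hE := by
    change divergence D = 0 at hD
    change divergence E = 0 at hE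
    change divergence ⁅D, E⁆ = 0
    rw [divergence_lie, hD, hE, map_zero, map_zero, sub_zero]

theorem mem_divergenceFree {D : Derivation k (MvPolynomial σ k) (MvPolynomial σ k)} :
    D ∈ divergenceFree k σ ↔ divergence D = 0 :=
  Iff.rfl

/-- The derivation `X b ^ i * ∂/∂X a`. -/
def shear (a b : σ) (i : ℕ) : Derivation k (MvPolynomial σ k) (MvPolynomial σ k) :=
  (X b ^ i : MvPolynomial σ k) • pderiv a

theorem shear_mem_divergenceFree {a b : σ} (hab : a ≠ b) (i : ℕ) :
    shear a b i ∈ divergenceFree k σ := by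
  classical
  rw [mem_divergenceFree]
  refine Finset.sum_eq_zero fun j _ => ?_
  rcases eq_or_ne j a with rfl | hj
  · simp [shear, pderiv_X_of_ne hab.symm]
  · simp [shear, pderiv_X_of_ne hj]

end Divergence

section Diagonal

attribute [local instance] LieRing.ofAssociativeRing

variable (τ) in
/-- The diagonal extension of a derivation of `k[X]` to the polynomial ring in `τ` copies of the
variables. -/
def diagonalDerivation (D : Derivation k (MvPolynomial σ k) (MvPolynomial σ k)) :
    Derivation k (MvPolynomial (τ × σ) k) (MvPolynomial (τ × σ) k) :=
  mkDerivation k fun x => rename (Prod.mk x.1) (D (X x.2))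

@[simp]
theorem diagonalDerivation_X (D : Derivation k (MvPolynomial σ k) (MvPolynomial σ k))
    (x : τ × σ) : diagonalDerivation τ D (X x) = rename (Prod.mk x.1) (D (X x.2)) :=
  mkDerivation_X _ _ _

theorem diagonalDerivation_rename (D : Derivation k (MvPolynomial σ k) (MvPolynomial σ k))
    (s : τ) (p : MvPolynomial σ k) :
    diagonalDerivation τ D (rename (Prod.mk s) p) = rename (Prod.mk s) (D p) :=
  derivation_rename (fun i => diagonalDerivation_X D (s, i)) p

variable (k σ τ) in
/-- The diagonal representation of the derivations of `k[X]` on the polynomial ring in `τ` copies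
of the variables. -/
def diagonalRepresentation : Derivation k (MvPolynomial σ k) (MvPolynomial σ k) →ₗ⁅k⁆
    Module.End k (MvPolynomial (τ × σ) k) where
  toFun D := (diagonalDerivation τ D : _ →ₗ[k] _)
  map_add' D E := by
    rw [← Derivation.coe_add_linearMap]
    congr 1
    ext1 x
    simp
  map_smul' c D := by
    rw [RingHom.id_apply, ← Derivation.coe_smul_linearMap]
    congr 1
    ext1 x
    simp
  map_lie' {D E} := by
    rw [← Derivation.commutator_coe_linear_map]
    congr 1
    ext1 x
    simp [Derivation.commutator_apply, diagonalDerivation_rename]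

@[simp]
theorem diagonalRepresentation_apply (D : Derivation k (MvPolynomial σ k) (MvPolynomial σ k))
    (p : MvPolynomial (τ × σ) k) : diagonalRepresentation k σ τ D p = diagonalDerivation τ D p :=
  rfl

/-- The vector `∑ s, c s * X (s, a)`, where `c` is the last row of the adjugate of the
Vandermonde matrix of the variables `X (s, b)`. -/
def vandermondeVector (k : Type*) [CommRing k] (a b : σ) (m : ℕ) :
    MvPolynomial (Fin (m + 1) × σ) k :=
  ∑ s, rename (fun t => (t, b)) ((Matrix.vandermonde X).adjugate (Fin.last m) s) * X (s, a)

theorem shear_vandermondeVector {a b : σ} (hab : a ≠ b) (m : ℕ) (i : Fin (m + 1)) :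
    diagonalDerivation (Fin (m + 1)) (shear a b i) (vandermondeVector k a b m) =
      rename (fun t => (t, b))
        (((Matrix.vandermonde (X (R := k) (σ := Fin (m + 1)))).det • (1 : Matrix _ _ _))
          (Fin.last m) i) := by
  have hzero (p : MvPolynomial (Fin (m + 1)) k) :
      diagonalDerivation (Fin (m + 1)) (shear a b i) (rename (fun t => (t, b)) p) = 0 :=
    derivation_rename_eq_zero (fun t => by simp [shear, pderiv_X_of_ne hab.symm]) p
  rw [← Matrix.adjugate_mul, Matrix.mul_apply]
  simp only [vandermondeVector, map_sum, Derivation.leibniz, hzero, smul_zero, add_zero]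
  simp [shear, Matrix.vandermonde_apply]

theorem not_isNoetherianRing_enveloping_divergenceFree [Fintype σ] [IsDomain k] [Nontrivial σ] :
    ¬ IsNoetherianRing (UniversalEnvelopingAlgebra k (divergenceFree k σ)) ∧
      ¬ IsNoetherianRing (UniversalEnvelopingAlgebra k (divergenceFree k σ))ᵐᵒᵖ := by
  obtain ⟨a, b, hab⟩ := exists_pair_ne σ
  refine UniversalEnvelopingAlgebra.not_isNoetherianRing_of_representations
    (fun i => ⟨shear a b i, shear_mem_divergenceFree hab i⟩)
    (fun m => MvPolynomial (Fin (m + 1) × σ) k)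
    (fun m => (diagonalRepresentation k σ (Fin (m + 1))).comp (divergenceFree k σ).incl)
    (vandermondeVector k a b) (fun m i hi => ?_) (fun m => ?_)
  · have h := shear_vandermondeVector (k := k) hab m ⟨i, by omega⟩
    rw [Matrix.smul_apply, Matrix.one_apply_ne (by simp [Fin.ext_iff, hi.ne']), smul_zero,
      map_zero] at h
    exact h
  · have h := shear_vandermondeVector (k := k) hab m (Fin.last m)
    rw [Matrix.smul_apply, Matrix.one_apply_eq, smul_eq_mul, mul_one] at h
    change diagonalDerivation _ (shear a b m) _ ≠ 0
    rw [Fin.val_last] at h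
    rw [h, Ne, map_eq_zero_iff _ (rename_injective _ (Prod.mk_left_injective b))]
    exact Matrix.det_vandermonde_ne_zero_iff.mpr (X_injective)

end Diagonal

end MvPolynomial

theorem special_subalgebra_and_not_noetherian (k : Type*) [Field k] [CharZero k]
    (n : ℕ) (hn : 1 ≤ n) :
    ∃ S : LieSubalgebra k (Derivation k (MvPolynomial (Fin n) k) (MvPolynomial (Fin n) k)),
      (∀ D : Derivation k (MvPolynomial (Fin n) k) (MvPolynomial (Fin n) k),
        D ∈ S ↔ (∑ j : Fin n, MvPolynomial.pderiv j (D (MvPolynomial.X j))) = 0) ∧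
      (2 ≤ n →
        ¬ IsNoetherianRing (UniversalEnvelopingAlgebra k S) ∧
          ¬ IsNoetherianRing (UniversalEnvelopingAlgebra k S)ᵐᵒᵖ) := by
  refine ⟨divergenceFree k (Fin n), fun D => mem_divergenceFree, fun h => ?_⟩
  have : Nontrivial (Fin n) := Fin.nontrivial_iff_two_le.mpr h
  exact not_isNoetherianRing_enveloping_divergenceFree

end
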